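/- With the setup of the mixDDPM reverse effort (clusters X₁,…,X_K with means c_i, weights p_i, x₀ uniform on X, and z ~ N(c_{D(x₀)}, I_d) conditionally independent of x₀ given the cluster), the mixed reverse effort equals the standard reverse effort minus ∑_{i=1}^K p_i ‖c_i‖²: E[‖x₀ − z_mix‖²] = E[‖x₀ − z_std‖²] − ∑_i p_i ‖c_i‖², where z_std ~ N(0, I_d) is independent of x₀. -/

import Mathlib

/-!
Expanding the square, noise with mean `c` and total variance `τ` that is uncorrelated with `x` has
reverse effort `E‖x‖² + τ + ‖E x - c‖² - ‖E x‖²`. For centered noise this is `E‖x‖² + τ`, and for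
noise centered at `c = E x` it is smaller by `‖c‖²`. The mixed coupling is of the second kind
conditionally on each cluster, so averaging over the clusters recombines the terms `E‖x‖² + τ` into
the standard effort and leaves the mean saving `∑ᵢ pᵢ ‖cᵢ‖²`.
-/

open MeasureTheory ProbabilityTheory Real

/-- The isotropic Gaussian measure `N(c, v I)` on `ℝ^d`. -/
noncomputable def gaussianPi (d : ℕ) (c : Fin d → ℝ) (v : NNReal) :
    Measure (Fin d → ℝ) :=
  Measure.pi fun i => gaussianReal (c i) v

section Conditioning

variable {Ω κ : Type*} {mΩ : MeasurableSpace Ω} {μ : Measure Ω}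

lemma measure_smul_cond_eq_restrict [IsFiniteMeasure μ] (s : Set Ω) :
    μ s • μ[|s] = μ.restrict s := by
  by_cases hs : μ s = 0
  · rw [hs, zero_smul, Measure.restrict_eq_zero.2 hs]
  · rw [ProbabilityTheory.cond, smul_smul, ENNReal.mul_inv_cancel hs (measure_ne_top μ s),
      one_smul]

lemma sum_measure_smul_cond_eq_of_partition [Fintype κ] [IsFiniteMeasure μ] {A : κ → Set Ω}
    (hA : ∀ i, MeasurableSet (A i)) (hdisj : Pairwise (Function.onFun Disjoint A))
    (hcover : ∀ᵐ ω ∂μ, ∃ i, ω ∈ A i) :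
    ∑ i, μ (A i) • μ[|A i] = μ := by
  have hae : ∀ᵐ ω ∂μ, ω ∈ ⋃ i, A i := by simpa only [Set.mem_iUnion] using hcover
  simp only [measure_smul_cond_eq_restrict]
  rw [← Measure.sum_fintype, ← Measure.restrict_iUnion hdisj hA,
    Measure.restrict_eq_self_of_ae_mem hae]

lemma integral_eq_sum_measureReal_smul_integral_cond {F : Type*} [NormedAddCommGroup F]
    [NormedSpace ℝ F] [Fintype κ] [IsFiniteMeasure μ] {A : κ → Set Ω}
    (hA : ∀ i, MeasurableSet (A i)) (hdisj : Pairwise (Function.onFun Disjoint A))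
    (hcover : ∀ᵐ ω ∂μ, ∃ i, ω ∈ A i) {f : Ω → F} (hf : ∀ i, Integrable f μ[|A i]) :
    ∫ ω, f ω ∂μ = ∑ i, μ.real (A i) • ∫ ω, f ω ∂μ[|A i] := by
  conv_lhs => rw [← sum_measure_smul_cond_eq_of_partition hA hdisj hcover]
  rw [integral_finsetSum_measure fun i _ => (hf i).smul_measure (measure_ne_top μ (A i))]
  simp only [integral_smul_measure, measureReal_def]

lemma memLp_cond {F : Type*} [NormedAddCommGroup F] {q : ENNReal} {f : Ω → F}
    (hf : MemLp f q μ) {s : Set Ω} (hs : μ s ≠ 0) : MemLp f q μ[|s] :=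
  (hf.restrict s).smul_measure (ENNReal.inv_ne_top.2 hs)

lemma hasLaw_cond_preimage {E : Type*} [MeasurableSpace E] {ν : Measure E} {x : Ω → E}
    (hx : HasLaw x ν μ) (hxm : Measurable x) {s : Set E} (hs : MeasurableSet s) :
    HasLaw x ν[|s] μ[|x ⁻¹' s] where
  aemeasurable := hxm.aemeasurable
  map_eq := by
    rw [ProbabilityTheory.cond, ProbabilityTheory.cond, Measure.map_smul,
      ← Measure.restrict_map hxm hs, ← Measure.map_apply hxm hs, hx.map_eq]

end Conditioning

section Uniform

variable {Ω E F : Type*} {mΩ : MeasurableSpace Ω} {μ : Measure Ω} [MeasurableSpace E]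
  [MeasurableSingletonClass E] [NormedAddCommGroup F]

lemma cond_uniformOn_of_subset {s t : Set E} (hs : s.Finite) (hts : t ⊆ s) :
    (uniformOn s)[|t] = uniformOn t := by
  rw [uniformOn, cond_cond_eq_cond_inter' hs.measurableSet (hs.subset hts).measurableSet
    (Measure.count_apply_lt_top.2 hs).ne, Set.inter_eq_right.2 hts, uniformOn]

lemma toMeasure_uniformOfFinset_eq_uniformOn (s : Finset E) (hs : s.Nonempty) :
    (PMF.uniformOfFinset s hs).toMeasure = uniformOn (s : Set E) := by
  classical
  ext t ht
  have hst : (s : Set E) ∩ t = ↑(s.filter (· ∈ t)) := by ext; simp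
  rw [PMF.toMeasure_uniformOfFinset_apply hs t ht, ← uniformOn_inter_self s.finite_toSet, hst,
    uniformOn_apply_finset, Finset.inter_eq_right.2 (Finset.filter_subset _ s)]

lemma memLp_comp_of_ae_mem_finset [IsFiniteMeasure μ] {x : Ω → E} (hx : AEMeasurable x μ)
    {s : Finset E} (hs : ∀ᵐ ω ∂μ, x ω ∈ s) {q : ENNReal} (g : E → F) :
    MemLp (fun ω => g (x ω)) q μ := by
  have hmap : ∀ᵐ y ∂μ.map x, y ∈ (s : Set E) := (ae_map_iff hx s.measurableSet).2 hs
  have hg : AEStronglyMeasurable g (μ.map x) := by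
    rw [← Measure.restrict_eq_self_of_ae_mem hmap]
    exact IntegrableOn.finset.aestronglyMeasurable
  refine .of_bound (hg.comp_aemeasurable hx) (∑ y ∈ s, ‖g y‖) ?_
  filter_upwards [hs] with ω hω
  exact Finset.single_le_sum (f := fun y => ‖g y‖) (fun _ _ => norm_nonneg _) hω

lemma integral_uniformOn_finset [NormedSpace ℝ F] [CompleteSpace F] (s : Finset E) (g : E → F) :
    ∫ y, g y ∂uniformOn (s : Set E) = (s.card : ℝ)⁻¹ • ∑ y ∈ s, g y := by
  classical
  have hsingleton (y : E) (hy : y ∈ s) : (uniformOn (s : Set E)).real {y} = (s.card : ℝ)⁻¹ := by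
    rw [measureReal_def, ← Finset.coe_singleton, uniformOn_apply_finset,
      Finset.inter_singleton_of_mem hy]
    simp
  have hmem : ∀ᵐ y ∂uniformOn (s : Set E), y ∈ (s : Set E) := ae_cond_mem s.measurableSet
  have : IsFiniteMeasure (uniformOn (s : Set E)) := by unfold uniformOn; infer_instance
  rw [← Measure.restrict_eq_self_of_ae_mem hmem, setIntegral_finset s IntegrableOn.finset,
    Finset.smul_sum]
  exact Finset.sum_congr rfl fun y hy => by rw [hsingleton y hy]

end Uniform

section Effort

variable {Ω ι : Type*} {mΩ : MeasurableSpace Ω} {μ : Measure Ω}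

/-- The reverse effort `E‖x - z‖²`. The squared norm is written as a sum over coordinates because
the norm of `ι → ℝ` is the sup norm. -/
noncomputable def reverseEffort [Fintype ι] (μ : Measure Ω) (x z : Ω → ι → ℝ) : ℝ :=
  ∫ ω, ∑ j, (x ω j - z ω j) ^ 2 ∂μ

/-- Noise `z` with mean `c` and coordinate variances `v`, each coordinate being uncorrelated with
the same coordinate of the data `x`. These moments are all that the reverse effort sees of a
Gaussian vector independent of `x`. -/
structure IsUncorrelatedNoise (μ : Measure Ω) (x z : Ω → ι → ℝ) (c v : ι → ℝ) : Prop where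
  memLp : ∀ j, MemLp (fun ω => z ω j) 2 μ
  integral_eq : ∀ j, ∫ ω, z ω j ∂μ = c j
  variance_eq : ∀ j, Var[fun ω => z ω j; μ] = v j
  covariance_eq_zero : ∀ j, cov[fun ω => x ω j, fun ω => z ω j; μ] = 0

lemma integral_sub_sq_of_covariance_eq_zero [IsProbabilityMeasure μ] {X Z : Ω → ℝ}
    (hX : MemLp X 2 μ) (hZ : MemLp Z 2 μ) (hXZ : cov[X, Z; μ] = 0) :
    ∫ ω, (X ω - Z ω) ^ 2 ∂μ
      = ∫ ω, X ω ^ 2 ∂μ + Var[Z; μ] + (μ[X] - μ[Z]) ^ 2 - μ[X] ^ 2 := by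
  have hmean : μ[X - Z] = μ[X] - μ[Z] :=
    integral_sub (hX.integrable one_le_two) (hZ.integrable one_le_two)
  have hvar := variance_eq_sub (hX.sub hZ)
  rw [variance_sub hX hZ, hXZ, variance_eq_sub hX, hmean] at hvar
  simp only [Pi.pow_apply, Pi.sub_apply] at hvar
  linarith

namespace IsUncorrelatedNoise

lemma of_gaussianPi {d : ℕ} {x z : Ω → Fin d → ℝ} {c : Fin d → ℝ}
    {v : NNReal} (hx : ∀ j, MemLp (fun ω => x ω j) 2 μ) (hz : HasLaw z (gaussianPi d c v) μ)
    (hxz : IndepFun x z μ) : IsUncorrelatedNoise μ x z c fun _ => v := by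
  have hlaw (j : Fin d) : HasLaw (fun ω => z ω j) (gaussianReal (c j) v) μ :=
    (measurePreserving_eval (fun i => gaussianReal (c i) v) j).fun_comp_hasLaw hz
  have hmemLp (j : Fin d) : MemLp (fun ω => z ω j) 2 μ := by
    have hid := memLp_id_gaussianReal' (μ := c j) (v := v) 2 ENNReal.ofNat_ne_top
    rw [← (hlaw j).map_eq] at hid
    exact hid.comp_of_map (hlaw j).aemeasurable
  exact
    { memLp := hmemLp
      integral_eq := fun j => (hlaw j).integral_eq.trans integral_id_gaussianReal
      variance_eq := fun j => (hlaw j).variance_eq.trans variance_id_gaussianReal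
      covariance_eq_zero := fun j =>
        (hxz.comp (measurable_pi_apply j) (measurable_pi_apply j)).covariance_eq_zero
          (hx j) (hmemLp j) }

variable [Fintype ι] {x z : Ω → ι → ℝ} {c v : ι → ℝ}

lemma integrable_sum_sub_sq (hz : IsUncorrelatedNoise μ x z c v)
    (hx : ∀ j, MemLp (fun ω => x ω j) 2 μ) :
    Integrable (fun ω => ∑ j, (x ω j - z ω j) ^ 2) μ :=
  integrable_finsetSum _ fun j _ => ((hx j).sub (hz.memLp j)).integrable_sq

lemma reverseEffort_eq [IsProbabilityMeasure μ] (hz : IsUncorrelatedNoise μ x z c v)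
    (hx : ∀ j, MemLp (fun ω => x ω j) 2 μ) :
    reverseEffort μ x z = ∫ ω, ∑ j, (x ω j ^ 2 + v j) ∂μ
      + ∑ j, ((∫ ω, x ω j ∂μ - c j) ^ 2 - (∫ ω, x ω j ∂μ) ^ 2) := by
  have hsub (j : ι) : Integrable (fun ω => (x ω j - z ω j) ^ 2) μ :=
    ((hx j).sub (hz.memLp j)).integrable_sq
  have hadd (j : ι) : Integrable (fun ω => x ω j ^ 2 + v j) μ :=
    (hx j).integrable_sq.add (integrable_const (v j))
  rw [reverseEffort, integral_finsetSum _ fun j _ => hsub j, integral_finsetSum _ fun j _ => hadd j,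
    ← Finset.sum_add_distrib]
  refine Finset.sum_congr rfl fun j _ => ?_
  rw [integral_sub_sq_of_covariance_eq_zero (hx j) (hz.memLp j) (hz.covariance_eq_zero j),
    hz.variance_eq, hz.integral_eq, integral_add (hx j).integrable_sq (integrable_const (v j)),
    integral_const, probReal_univ, one_smul, add_sub_assoc]

lemma reverseEffort_eq_of_centered [IsProbabilityMeasure μ] (hz : IsUncorrelatedNoise μ x z 0 v)
    (hx : ∀ j, MemLp (fun ω => x ω j) 2 μ) :
    reverseEffort μ x z = ∫ ω, ∑ j, (x ω j ^ 2 + v j) ∂μ := by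
  simp only [hz.reverseEffort_eq hx, Pi.zero_apply, sub_zero, sub_self, Finset.sum_const_zero,
    add_zero]

lemma reverseEffort_eq_of_mean_eq [IsProbabilityMeasure μ] (hz : IsUncorrelatedNoise μ x z c v)
    (hx : ∀ j, MemLp (fun ω => x ω j) 2 μ) (hc : ∀ j, c j = ∫ ω, x ω j ∂μ) :
    reverseEffort μ x z = ∫ ω, ∑ j, (x ω j ^ 2 + v j) ∂μ - ∑ j, c j ^ 2 := by
  simp only [hz.reverseEffort_eq hx, ← hc, sub_self, zero_pow two_ne_zero, zero_sub,
    Finset.sum_neg_distrib, ← sub_eq_add_neg]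

end IsUncorrelatedNoise

end Effort

section Clustering

variable {Ω ι κ : Type*} {mΩ : MeasurableSpace Ω} {μ : Measure Ω}

/-- A clustering of the data `x` with weights `p i` and centers `c i`: the probabilities of the
clusters and the conditional means of `x` on them. The clusters are events `A i` of positive
probability, rather than sets of data points, so that `x` may have any law. -/
structure IsClustering (μ : Measure Ω) (x : Ω → ι → ℝ) (A : κ → Set Ω) (p : κ → ℝ)
    (c : κ → ι → ℝ) : Prop where
  measurableSet : ∀ i, MeasurableSet (A i)
  disjoint : Pairwise (Function.onFun Disjoint A)
  cover : ∀ᵐ ω ∂μ, ∃ i, ω ∈ A i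
  measure_ne_zero : ∀ i, μ (A i) ≠ 0
  weight_eq : ∀ i, p i = μ.real (A i)
  center_eq : ∀ i j, c i j = ∫ ω, x ω j ∂μ[|A i]

lemma IsClustering.of_hasLaw_uniformOn [Countable ι] {X : Finset (ι → ℝ)}
    {Xc : κ → Finset (ι → ℝ)} (hne : ∀ i, (Xc i).Nonempty)
    (hdisj : ∀ i j, i ≠ j → Disjoint (Xc i) (Xc j)) (hcover : ∀ y, y ∈ X ↔ ∃ i, y ∈ Xc i)
    {c : κ → ι → ℝ} (hc : ∀ i j, c i j = (∑ y ∈ Xc i, y j) / (Xc i).card)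
    {p : κ → ℝ} (hp : ∀ i, p i = (Xc i).card / X.card) {x : Ω → ι → ℝ} (hxm : Measurable x)
    (hx : HasLaw x (uniformOn (X : Set (ι → ℝ))) μ) :
    IsClustering μ x (fun i => x ⁻¹' (Xc i : Set (ι → ℝ))) p c := by
  classical
  have hsub (i : κ) : Xc i ⊆ X := fun y hy => (hcover y).2 ⟨i, hy⟩
  have hmeasure (i : κ) : μ (x ⁻¹' (Xc i : Set (ι → ℝ))) = (Xc i).card / X.card := by
    rw [← Measure.map_apply hxm (Xc i).measurableSet, hx.map_eq, uniformOn_apply_finset,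
      Finset.inter_eq_right.2 (hsub i)]
  have hlaw (i : κ) : HasLaw x (uniformOn (Xc i : Set (ι → ℝ))) μ[|x ⁻¹' (Xc i : Set (ι → ℝ))] :=
    cond_uniformOn_of_subset X.finite_toSet (Finset.coe_subset.2 (hsub i)) ▸
      hasLaw_cond_preimage hx hxm (Xc i).measurableSet
  have hmem : ∀ᵐ ω ∂μ, x ω ∈ (X : Set (ι → ℝ)) :=
    (hx.ae_iff (measurableSet_setOfPred.1 X.measurableSet)).2 (ae_cond_mem X.measurableSet)
  exact
    { measurableSet := fun i => hxm (Xc i).measurableSet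
      disjoint := fun i j hij => .preimage x (Finset.disjoint_coe.2 (hdisj i j hij))
      cover := hmem.mono fun ω hω => (hcover _).1 hω
      measure_ne_zero := fun i => by simp [hmeasure, (hne i).ne_empty]
      weight_eq := fun i => by simp [measureReal_def, hmeasure, hp]
      center_eq := fun i j => by
        rw [hc, ← Function.comp_def (fun y : ι → ℝ => y j) x,
          (hlaw i).integral_comp (measurable_pi_apply j).aestronglyMeasurable,
          integral_uniformOn_finset, smul_eq_mul, inv_mul_eq_div] }

theorem stmt3_general [Fintype ι] [Fintype κ] [IsProbabilityMeasure μ] {x zmix zstd : Ω → ι → ℝ}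
    {A : κ → Set Ω} {p : κ → ℝ} {c : κ → ι → ℝ} {v : ι → ℝ} (hA : IsClustering μ x A p c)
    (hx : ∀ j, MemLp (fun ω => x ω j) 2 μ)
    (hmix : ∀ i, IsUncorrelatedNoise μ[|A i] x zmix (c i) v)
    (hstd : IsUncorrelatedNoise μ x zstd 0 v) :
    reverseEffort μ x zmix = reverseEffort μ x zstd - ∑ i, p i * ∑ j, c i j ^ 2 := by
  have (i : κ) : IsProbabilityMeasure μ[|A i] := cond_isProbabilityMeasure (hA.measure_ne_zero i)
  have hxA (i : κ) (j : ι) : MemLp (fun ω => x ω j) 2 μ[|A i] :=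
    memLp_cond (hx j) (hA.measure_ne_zero i)
  have htotal {f : Ω → ℝ} (hf : ∀ i, Integrable f μ[|A i]) :
      ∫ ω, f ω ∂μ = ∑ i, p i * ∫ ω, f ω ∂μ[|A i] := by
    simp only [hA.weight_eq, ← smul_eq_mul]
    exact integral_eq_sum_measureReal_smul_integral_cond hA.measurableSet hA.disjoint hA.cover hf
  have hintegrable (i : κ) : Integrable (fun ω => ∑ j, (x ω j ^ 2 + v j)) μ[|A i] :=
    integrable_finsetSum _ fun j _ => (hxA i j).integrable_sq.add (integrable_const (v j))
  calc reverseEffort μ x zmix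
      = ∑ i, p i * reverseEffort μ[|A i] x zmix :=
        htotal fun i => (hmix i).integrable_sum_sub_sq (hxA i)
    _ = ∑ i, p i * (∫ ω, ∑ j, (x ω j ^ 2 + v j) ∂μ[|A i] - ∑ j, c i j ^ 2) := by
        simp only [fun i => (hmix i).reverseEffort_eq_of_mean_eq (hxA i) (hA.center_eq i)]
    _ = ∫ ω, ∑ j, (x ω j ^ 2 + v j) ∂μ - ∑ i, p i * ∑ j, c i j ^ 2 := by
        simp only [htotal hintegrable, mul_sub, Finset.sum_sub_distrib]
    _ = reverseEffort μ x zstd - ∑ i, p i * ∑ j, c i j ^ 2 := by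
        rw [hstd.reverseEffort_eq_of_centered hx]

end Clustering

/-- Proposition 1 (effort reduction): with the mixDDPM coupling
(`x₀` uniform on `X`, `z_mix ~ N(c_{D(x₀)}, I_d)` conditionally independent of
`x₀` given the cluster) and `z_std ~ N(0, I_d)` independent of `x₀`,
`E[‖x₀ − z_mix‖²] = E[‖x₀ − z_std‖²] − ∑ᵢ pᵢ ‖cᵢ‖²`. -/
theorem stmt3 {d K : ℕ} {Ω : Type*} [MeasureSpace Ω]
    [IsProbabilityMeasure (ℙ : Measure Ω)]
    (X : Finset (Fin d → ℝ)) (hX : X.Nonempty)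
    (Xc : Fin K → Finset (Fin d → ℝ))
    (hne : ∀ i, (Xc i).Nonempty)
    (hdisj : ∀ i j, i ≠ j → Disjoint (Xc i) (Xc j))
    (hcover : ∀ x, x ∈ X ↔ ∃ i, x ∈ Xc i)
    (c : Fin K → Fin d → ℝ)
    (hc : ∀ i j, c i j = (∑ x ∈ Xc i, x j) / (Xc i).card)
    (p : Fin K → ℝ) (hp : ∀ i, p i = (Xc i).card / X.card)
    (x₀ zmix zstd : Ω → Fin d → ℝ)
    (hx : Measurable x₀) (hzm : Measurable zmix) (hzs : Measurable zstd)
    (hxlaw : Measure.map x₀ ℙ = (PMF.uniformOfFinset X hX).toMeasure)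
    (hzmlaw : ∀ i, Measure.map zmix
        (ℙ[|x₀ ⁻¹' (Xc i : Set (Fin d → ℝ))]) = gaussianPi d (c i) 1)
    (hzmindep : ∀ i, IndepFun x₀ zmix (ℙ[|x₀ ⁻¹' (Xc i : Set (Fin d → ℝ))]))
    (hzslaw : Measure.map zstd ℙ = gaussianPi d 0 1)
    (hzsindep : IndepFun x₀ zstd ℙ) :
    ∫ ω, ∑ j, (x₀ ω j - zmix ω j) ^ 2 ∂ℙ
      = (∫ ω, ∑ j, (x₀ ω j - zstd ω j) ^ 2 ∂ℙ)
        - ∑ i, p i * ∑ j, (c i j) ^ 2 := by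
  have hxunif : HasLaw x₀ (uniformOn (X : Set (Fin d → ℝ))) ℙ :=
    ⟨hx.aemeasurable, hxlaw.trans (toMeasure_uniformOfFinset_eq_uniformOn X hX)⟩
  have hcluster := IsClustering.of_hasLaw_uniformOn hne hdisj hcover hc hp hx hxunif
  have hmemLp (j : Fin d) : MemLp (fun ω => x₀ ω j) 2 ℙ :=
    memLp_comp_of_ae_mem_finset hx.aemeasurable
      (hcluster.cover.mono fun ω hω => (hcover (x₀ ω)).2 hω) (· j)
  exact stmt3_general hcluster hmemLp
    (fun i => .of_gaussianPi (fun j => memLp_cond (hmemLp j) (hcluster.measure_ne_zero i))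
      ⟨hzm.aemeasurable, hzmlaw i⟩ (hzmindep i))
    (.of_gaussianPi hmemLp ⟨hzs.aemeasurable, hzslaw⟩ hzsindep)
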